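/- (Growth of the quartic interaction coefficients A and B) For all i, j, l, m ∈ ℕ, |∫₀^{π/2} (e_i'(x)/ω_i)·(e_j'(x)/ω_j)·e_l(x)·(∫_x^{π/2} e_m(y)·sin(y)·cos(y) dy)·tan²(x) dx| ≤ (4/√π)·ω_l/ω_m and |∫₀^{π/2} e_i(x)·e_j(x)·e_l(x)·(∫_x^{π/2} e_m(y)·sin(y)·cos(y) dy)·tan²(x) dx| ≤ (4/√π)·ω_l/ω_m; i.e. the Fourier constants A_{ijl}^{(m)} and B_{ijl}^{(m)} are O(ω_l/ω_m). -/

import Mathlib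

/-!
With respect to `tan² x dx` on `(0, π/2)` the functions `e_j` and `e_j' / ω_j` have norm one, so by
`2|uv| ≤ u² + v²` both coefficients are at most `sup |e_l| · sup |∫_x^{π/2} e_m sin cos|`.

Since `|sin (n x)| ≤ n |sin x|`, the first supremum is at most `(2/√π) ω_l`. The inner integral is
explicit: `e_m sin cos` is a combination of sines of frequencies `ω_m` and `ω_m ± 2`, whose cosine
primitives vanish at `π/2` because these frequencies are odd; this gives the bound `2 / ω_m`.

The norms reduce to the single integral of `(a cos (a x) - sin (a x) cot x)²`, which has an
elementary primitive; the reflection `x ↦ π/2 - x` exchanges the roles of `e_j` and `e_j' / ω_j`.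
-/

open Real MeasureTheory

/-- The AdS linearized eigenvalue `ω_j = 2j + 3`. -/
noncomputable def ω (j : ℕ) : ℝ := 2 * j + 3

/-- The AdS linearized eigenfunction
`e_j(x) = (2/√π)·(ω_j² − 1)^(−1/2)·(ω_j·sin(ω_j x)/tan x − cos(ω_j x))`. -/
noncomputable def e (j : ℕ) (x : ℝ) : ℝ :=
  (2 / Real.sqrt Real.pi) * (Real.sqrt (ω j ^ 2 - 1))⁻¹ *
    (ω j * Real.sin (ω j * x) / Real.tan x - Real.cos (ω j * x))

/-- The derivative of the AdS linearized eigenfunction,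
`e_j'(x) = (2/√π)·ω_j·(ω_j² − 1)^(−1/2)·(ω_j·cos(ω_j x)/tan x − sin(ω_j x)/tan² x)`. -/
noncomputable def e' (j : ℕ) (x : ℝ) : ℝ :=
  (2 / Real.sqrt Real.pi) * ω j * (Real.sqrt (ω j ^ 2 - 1))⁻¹ *
    (ω j * Real.cos (ω j * x) / Real.tan x - Real.sin (ω j * x) / Real.tan x ^ 2)

section TrigonometricBounds

lemma sin_pos_of_mem_Ioo_pi_div_two {x : ℝ} (hx : x ∈ Set.Ioo 0 (π / 2)) : 0 < sin x :=
  sin_pos_of_mem_Ioo ⟨hx.1, hx.2.trans (half_lt_self pi_pos)⟩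

lemma tan_ne_zero_of_mem_Ioo_pi_div_two {x : ℝ} (hx : x ∈ Set.Ioo 0 (π / 2)) : tan x ≠ 0 :=
  (tan_pos_of_pos_of_lt_pi_div_two hx.1 hx.2).ne'

lemma abs_sin_nat_mul_le (n : ℕ) (x : ℝ) : |sin (n * x)| ≤ n * |sin x| := by
  induction n with
  | zero => simp
  | succ n ih =>
    calc |sin ((n + 1 : ℕ) * x)| = |sin (n * x) * cos x + cos (n * x) * sin x| := by
          rw [← sin_add]
          push_cast
          ring_nf
      _ ≤ |sin (n * x)| * |cos x| + |cos (n * x)| * |sin x| := by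
          simpa only [abs_mul] using abs_add_le (sin (n * x) * cos x) (cos (n * x) * sin x)
      _ ≤ n * |sin x| * 1 + 1 * |sin x| := by
          gcongr <;> exact abs_cos_le_one _
      _ = (n + 1 : ℕ) * |sin x| := by
          push_cast
          ring

lemma abs_mul_sin_mul_cot_sub_cos_le (n : ℕ) {x : ℝ} (hx : sin x ≠ 0) :
    |(n + 1) * sin ((n + 1) * x) * cot x - cos ((n + 1) * x)| ≤ (n + 1 : ℝ) ^ 2 - 1 := by
  have h_split : (n + 1) * sin ((n + 1) * x) * cot x - cos ((n + 1) * x) =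
      n * cos ((n + 1) * x) + (n + 1) * (sin (n * x) / sin x) := by
    have h_sin : sin (n * x) = sin ((n + 1) * x) * cos x - cos ((n + 1) * x) * sin x := by
      rw [← sin_sub]
      ring_nf
    rw [h_sin, cot_eq_cos_div_sin]
    field_simp
    ring
  have h_ratio : |sin (n * x) / sin x| ≤ n := by
    rw [abs_div, div_le_iff₀ (abs_pos.2 hx)]
    exact abs_sin_nat_mul_le n x
  calc |(n + 1) * sin ((n + 1) * x) * cot x - cos ((n + 1) * x)|
      ≤ |(n : ℝ) * cos ((n + 1) * x)| + |(n + 1) * (sin (n * x) / sin x)| :=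
        h_split ▸ abs_add_le _ _
    _ = n * |cos ((n + 1) * x)| + (n + 1) * |sin (n * x) / sin x| := by
        rw [abs_mul, abs_mul, Nat.abs_cast, abs_of_nonneg (by positivity : (0 : ℝ) ≤ n + 1)]
    _ ≤ n * 1 + (n + 1) * n := by
        gcongr
        exact abs_cos_le_one _
    _ = (n + 1 : ℝ) ^ 2 - 1 := by ring

/-- Nearly sharp at `a = 3`, where it says `72 ≤ 25 π`. -/
lemma mul_sqrt_sq_sub_one_le {a : ℝ} (ha : 3 ≤ a) : a * √(a ^ 2 - 1) ≤ √π * (a ^ 2 - 4) := by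
  have ha_sq : 9 ≤ a ^ 2 := by nlinarith
  refine (sq_le_sq₀ (by positivity) (mul_nonneg (sqrt_nonneg π) (by linarith))).1 ?_
  rw [mul_pow, mul_pow, sq_sqrt pi_pos.le, sq_sqrt (by linarith)]
  calc a ^ 2 * (a ^ 2 - 1) ≤ 3 * (a ^ 2 - 4) ^ 2 := by nlinarith
    _ ≤ π * (a ^ 2 - 4) ^ 2 := by gcongr; exact pi_gt_three.le

end TrigonometricBounds

section TrigonometricIntegrals

lemma ne_zero_of_cos_mul_eq_zero {a x : ℝ} (h : cos (a * x) = 0) : a ≠ 0 := by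
  rintro rfl
  simp at h

lemma integral_sin_const_mul {a : ℝ} (ha : cos (a * (π / 2)) = 0) (x : ℝ) :
    ∫ y in x..π / 2, sin (a * y) = cos (a * x) / a := by
  rw [intervalIntegral.integral_comp_mul_left _ (ne_zero_of_cos_mul_eq_zero ha), integral_sin, ha,
    sub_zero, smul_eq_mul, inv_mul_eq_div]

lemma integral_cos_sq_mul_sin_sub_sin_mul_cos_mul_cos {a : ℝ} (ha : cos (a * (π / 2)) = 0)
    (x : ℝ) :
    ∫ y in x..π / 2, (a * cos y ^ 2 * sin (a * y) - sin y * cos y * cos (a * y)) =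
      1 / 2 * cos (a * x) + (a - 1) / (4 * (a + 2)) * cos ((a + 2) * x) +
        (a + 1) / (4 * (a - 2)) * cos ((a - 2) * x) := by
  have ha₀ : a ≠ 0 := ne_zero_of_cos_mul_eq_zero ha
  have h_add : cos ((a + 2) * (π / 2)) = 0 := by
    rw [show (a + 2) * (π / 2) = a * (π / 2) + π by ring, cos_add_pi, ha, neg_zero]
  have h_sub : cos ((a - 2) * (π / 2)) = 0 := by
    rw [show (a - 2) * (π / 2) = a * (π / 2) - π by ring, cos_sub_pi, ha, neg_zero]
  have h_expand (y : ℝ) : a * cos y ^ 2 * sin (a * y) - sin y * cos y * cos (a * y) =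
      a / 2 * sin (a * y) + (a - 1) / 4 * sin ((a + 2) * y) +
        (a + 1) / 4 * sin ((a - 2) * y) := by
    rw [add_mul, sub_mul, sin_add, sin_sub, sin_two_mul, cos_two_mul]
    ring
  have h_int (c b : ℝ) : IntervalIntegrable (fun y => c * sin (b * y)) volume x (π / 2) :=
    Continuous.intervalIntegrable (by fun_prop) _ _
  simp only [h_expand]
  rw [intervalIntegral.integral_add ((h_int _ _).add (h_int _ _)) (h_int _ _),
    intervalIntegral.integral_add (h_int _ _) (h_int _ _)]
  simp only [intervalIntegral.integral_const_mul, integral_sin_const_mul ha,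
    integral_sin_const_mul h_add, integral_sin_const_mul h_sub]
  field_simp

lemma abs_integral_cos_sq_mul_sin_sub_sin_mul_cos_mul_cos_le {a : ℝ}
    (ha : cos (a * (π / 2)) = 0) (ha₂ : 2 < a) (x : ℝ) :
    |∫ y in x..π / 2, (a * cos y ^ 2 * sin (a * y) - sin y * cos y * cos (a * y))| ≤
      (a ^ 2 - 1) / (a ^ 2 - 4) := by
  have h_mul_cos_le {p : ℝ} (hp : 0 ≤ p) (t : ℝ) : |p * cos t| ≤ p := by
    rw [abs_mul, abs_of_nonneg hp]
    exact mul_le_of_le_one_right hp (abs_cos_le_one t)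
  have h_add : 0 ≤ (a - 1) / (4 * (a + 2)) := div_nonneg (by linarith) (by linarith)
  have h_sub : 0 ≤ (a + 1) / (4 * (a - 2)) := div_nonneg (by linarith) (by linarith)
  rw [integral_cos_sq_mul_sin_sub_sin_mul_cos_mul_cos ha]
  calc _ ≤ |1 / 2 * cos (a * x)| + |(a - 1) / (4 * (a + 2)) * cos ((a + 2) * x)| +
        |(a + 1) / (4 * (a - 2)) * cos ((a - 2) * x)| := abs_add_three _ _ _
    _ ≤ 1 / 2 + (a - 1) / (4 * (a + 2)) + (a + 1) / (4 * (a - 2)) := by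
        gcongr
        exacts [h_mul_cos_le one_half_pos.le _, h_mul_cos_le h_add _, h_mul_cos_le h_sub _]
    _ = (a ^ 2 - 1) / (a ^ 2 - 4) := by
        have h_add_ne : a + 2 ≠ 0 := by linarith
        have h_sub_ne : a - 2 ≠ 0 := by linarith
        rw [show a ^ 2 - 4 = (a + 2) * (a - 2) by ring]
        field_simp
        ring

end TrigonometricIntegrals

section CotangentSquareIntegral

/-- The function `a cos (a x) - sin (a x) cot x`. For `a = ω_j` a constant multiple of it is
`e_j'/ω_j · tan` on `(0, π/2)`, and, after the reflection `x ↦ π/2 - x`, `e_j · tan`. -/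
noncomputable def cosSubSinCot (a x : ℝ) : ℝ := a * cos (a * x) - sin (a * x) * cot x

/-- A primitive of `cosSubSinCot a ^ 2` on `(0, π/2)` for `a ≠ 0`: that square is the derivative of
`-sin² (a x) cot x` plus `a² cos² (a x) - sin² (a x)`, whose integral gives the other terms. -/
noncomputable def cosSubSinCotSqPrimitive (a x : ℝ) : ℝ :=
  -(sin (a * x) ^ 2 * cot x) + (a ^ 2 - 1) / 2 * x +
    (a ^ 2 + 1) / (2 * a) * (sin (a * x) * cos (a * x))

lemma hasDerivAt_cot {x : ℝ} (hx : sin x ≠ 0) : HasDerivAt cot (-(1 + cot x ^ 2)) x := by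
  have h_cot : cot = fun t => cos t / sin t := funext cot_eq_cos_div_sin
  rw [h_cot]
  refine ((hasDerivAt_cos x).fun_div (hasDerivAt_sin x) hx).congr_deriv ?_
  field_simp
  ring

lemma hasDerivAt_cosSubSinCotSqPrimitive {a x : ℝ} (ha : a ≠ 0) (hx : sin x ≠ 0) :
    HasDerivAt (cosSubSinCotSqPrimitive a) (cosSubSinCot a x ^ 2) x := by
  have h_arg : HasDerivAt (fun t => a * t) a x := by
    simpa using (hasDerivAt_id x).const_mul a
  refine ((((h_arg.sin.fun_pow 2).fun_mul (hasDerivAt_cot hx)).fun_neg.fun_add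
    ((hasDerivAt_id x).const_mul ((a ^ 2 - 1) / 2))).fun_add
    ((h_arg.sin.fun_mul h_arg.cos).const_mul ((a ^ 2 + 1) / (2 * a)))).congr_deriv ?_
  unfold cosSubSinCot
  field_simp
  linear_combination (1 - a ^ 2) * sin_sq_add_cos_sq (a * x)

/-- Writing sines through `sinc` removes the singularity of `cot` at `0`; the formula also holds at
`x = 0`, where `cot 0 = 0`. -/
lemma sin_mul_sq_mul_cot_eq_sinc (a x : ℝ) :
    sin (a * x) ^ 2 * cot x = a ^ 2 * x * sinc (a * x) ^ 2 * cos x / sinc x := by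
  have h_sin (t : ℝ) : sin t = t * sinc t := by
    rcases eq_or_ne t 0 with rfl | ht
    · simp
    · rw [sinc_of_ne_zero ht, mul_div_cancel₀ _ ht]
  rcases eq_or_ne x 0 with rfl | hx
  · simp
  · rw [cot_eq_cos_div_sin, h_sin (a * x), h_sin x]
    field_simp

lemma continuousOn_cosSubSinCotSqPrimitive (a : ℝ) :
    ContinuousOn (cosSubSinCotSqPrimitive a) (Set.Icc 0 (π / 2)) := by
  have h_sinc : ∀ x ∈ Set.Icc 0 (π / 2), sinc x ≠ 0 := by
    intro x hx
    rcases hx.1.eq_or_lt with rfl | hx₀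
    · simp
    · rw [sinc_of_ne_zero hx₀.ne']
      exact (div_pos (sin_pos_of_pos_of_lt_pi hx₀ (by linarith [hx.2, pi_pos])) hx₀).ne'
  have h_sinc_cont : ContinuousOn (fun x => a ^ 2 * x * sinc (a * x) ^ 2 * cos x / sinc x)
      (Set.Icc 0 (π / 2)) := by
    have h_num : Continuous fun x => a ^ 2 * x * sinc (a * x) ^ 2 * cos x := by
      have := continuous_sinc
      fun_prop
    exact h_num.continuousOn.div continuous_sinc.continuousOn h_sinc
  unfold cosSubSinCotSqPrimitive
  simp only [sin_mul_sq_mul_cot_eq_sinc]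
  exact (h_sinc_cont.neg.add (by fun_prop)).add (by fun_prop)

lemma integral_cosSubSinCot_sq {a : ℝ} (ha : a ≠ 0) :
    ∫ x in 0..π / 2, cosSubSinCot a x ^ 2 =
      (a ^ 2 - 1) * (π / 4) + (a ^ 2 + 1) / (2 * a) * (sin (a * (π / 2)) * cos (a * (π / 2))) := by
  have h_cont := continuousOn_cosSubSinCotSqPrimitive a
  have h_deriv : ∀ x ∈ Set.Ioo 0 (π / 2),
      HasDerivAt (cosSubSinCotSqPrimitive a) (cosSubSinCot a x ^ 2) x := fun x hx =>
    hasDerivAt_cosSubSinCotSqPrimitive ha (sin_pos_of_mem_Ioo_pi_div_two hx).ne'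
  have h_int : IntervalIntegrable (fun x => cosSubSinCot a x ^ 2) volume 0 (π / 2) := by
    rw [intervalIntegrable_iff_integrableOn_Ioc_of_le pi_div_two_pos.le]
    exact intervalIntegral.integrableOn_deriv_of_nonneg h_cont h_deriv fun x _ => sq_nonneg _
  rw [intervalIntegral.integral_eq_sub_of_hasDerivAt_of_le pi_div_two_pos.le h_cont h_deriv h_int]
  simp only [cosSubSinCotSqPrimitive, cot_eq_cos_div_sin, cos_pi_div_two, mul_zero, sin_zero]
  ring

end CotangentSquareIntegral

lemma abs_integral_mul_mul_le {α : Type*} [MeasurableSpace α] {μ : Measure α} {u v w : α → ℝ}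
    {C : ℝ} (hu : Integrable (fun x => u x ^ 2) μ) (hv : Integrable (fun x => v x ^ 2) μ)
    (hw : ∀ᵐ x ∂μ, |w x| ≤ C) :
    |∫ x, u x * v x * w x ∂μ| ≤ ((∫ x, u x ^ 2 ∂μ) + ∫ x, v x ^ 2 ∂μ) / 2 * C := by
  have h_majorant : Integrable (fun x => (u x ^ 2 + v x ^ 2) / 2 * C) μ :=
    ((hu.add hv).div_const 2).mul_const C
  have h_le : ∀ᵐ x ∂μ, ‖u x * v x * w x‖ ≤ (u x ^ 2 + v x ^ 2) / 2 * C := by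
    filter_upwards [hw] with x hx
    have h_young : |u x * v x| ≤ (u x ^ 2 + v x ^ 2) / 2 := by
      rw [abs_mul, ← sq_abs (u x), ← sq_abs (v x)]
      linarith [two_mul_le_add_sq |u x| |v x|]
    rw [norm_mul, norm_eq_abs, norm_eq_abs]
    gcongr
  calc |∫ x, u x * v x * w x ∂μ| ≤ ∫ x, (u x ^ 2 + v x ^ 2) / 2 * C ∂μ :=
        norm_integral_le_of_norm_le h_majorant h_le
    _ = ((∫ x, u x ^ 2 ∂μ) + ∫ x, v x ^ 2 ∂μ) / 2 * C := by
        rw [integral_mul_const, integral_div, integral_add hu hv]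

section Eigenvalues

lemma three_le_ω (j : ℕ) : 3 ≤ ω j := by
  simp [ω]

lemma ω_sq_sub_one_pos (j : ℕ) : 0 < ω j ^ 2 - 1 := by
  nlinarith [three_le_ω j]

lemma cos_ω_mul_pi_div_two (j : ℕ) : cos (ω j * (π / 2)) = 0 :=
  cos_eq_zero_iff.2 ⟨j + 1, by push_cast [ω]; ring⟩

lemma sin_ω_mul_pi_div_two_sq (j : ℕ) : sin (ω j * (π / 2)) ^ 2 = 1 := by
  simp [sin_sq, cos_ω_mul_pi_div_two]

/-- The normalization constant `(2/√π)·(ω_j² − 1)^(−1/2)` of the eigenfunction `e_j`. -/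
noncomputable def normConst (j : ℕ) : ℝ := 2 / √π * (√(ω j ^ 2 - 1))⁻¹

lemma normConst_nonneg (j : ℕ) : 0 ≤ normConst j := by
  unfold normConst
  positivity

lemma normConst_sq_mul (j : ℕ) : normConst j ^ 2 * ((ω j ^ 2 - 1) * (π / 4)) = 1 := by
  have hω := ω_sq_sub_one_pos j
  rw [normConst, mul_pow, div_pow, inv_pow, sq_sqrt pi_pos.le, sq_sqrt hω.le]
  field_simp
  norm_num

lemma normConst_mul (j : ℕ) : normConst j * (ω j ^ 2 - 1) = 2 / √π * √(ω j ^ 2 - 1) := by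
  rw [normConst, mul_assoc, inv_mul_eq_div, div_sqrt]

end Eigenvalues

section Eigenfunctions

lemma e_eq_normConst_mul (j : ℕ) (x : ℝ) :
    e j x = normConst j * (ω j * sin (ω j * x) * cot x - cos (ω j * x)) := by
  rw [e, normConst, div_eq_mul_inv _ (tan x), tan_inv_eq_cot]

lemma abs_e_le (l : ℕ) {x : ℝ} (hx : sin x ≠ 0) : |e l x| ≤ 2 / √π * ω l := by
  have h_bracket : |ω l * sin (ω l * x) * cot x - cos (ω l * x)| ≤ ω l ^ 2 - 1 := by
    have hω : ω l = (2 * l + 2 : ℕ) + 1 := by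
      push_cast [ω]
      ring
    rw [hω]
    exact abs_mul_sin_mul_cot_sub_cos_le (2 * l + 2) hx
  calc |e l x| = normConst l * |ω l * sin (ω l * x) * cot x - cos (ω l * x)| := by
        rw [e_eq_normConst_mul, abs_mul, abs_of_nonneg (normConst_nonneg l)]
    _ ≤ normConst l * (ω l ^ 2 - 1) := by gcongr; exact normConst_nonneg l
    _ = 2 / √π * √(ω l ^ 2 - 1) := normConst_mul l
    _ ≤ 2 / √π * ω l := by
        gcongr
        exact sqrt_le_iff.2 ⟨by linarith [three_le_ω l], by linarith⟩

lemma e_mul_sin_mul_cos (m : ℕ) {y : ℝ} (hy : sin y ≠ 0) :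
    e m y * sin y * cos y =
      normConst m * (ω m * cos y ^ 2 * sin (ω m * y) - sin y * cos y * cos (ω m * y)) := by
  rw [e_eq_normConst_mul, cot_eq_cos_div_sin]
  field_simp

lemma abs_setIntegral_e_mul_sin_mul_cos_le (m : ℕ) {x : ℝ} (hx : x ∈ Set.Ioo 0 (π / 2)) :
    |∫ y in Set.Ioo x (π / 2), e m y * sin y * cos y| ≤ 2 / ω m := by
  have hω := three_le_ω m
  have hω_sq : 0 < ω m ^ 2 - 4 := by nlinarith
  have h_congr : ∫ y in Set.Ioo x (π / 2), e m y * sin y * cos y = normConst m *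
      ∫ y in x..π / 2, (ω m * cos y ^ 2 * sin (ω m * y) - sin y * cos y * cos (ω m * y)) := by
    rw [intervalIntegral.integral_of_le hx.2.le, integral_Ioc_eq_integral_Ioo,
      ← integral_const_mul]
    exact setIntegral_congr_fun measurableSet_Ioo fun y hy =>
      e_mul_sin_mul_cos m (sin_pos_of_mem_Ioo_pi_div_two ⟨hx.1.trans hy.1, hy.2⟩).ne'
  rw [h_congr, abs_mul, abs_of_nonneg (normConst_nonneg m)]
  calc _ ≤ normConst m * ((ω m ^ 2 - 1) / (ω m ^ 2 - 4)) :=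
        mul_le_mul_of_nonneg_left (abs_integral_cos_sq_mul_sin_sub_sin_mul_cos_mul_cos_le
          (cos_ω_mul_pi_div_two m) (by linarith) x) (normConst_nonneg m)
    _ = 2 / √π * √(ω m ^ 2 - 1) / (ω m ^ 2 - 4) := by rw [← mul_div_assoc, normConst_mul]
    _ ≤ 2 / ω m := by
        rw [div_mul_eq_mul_div, div_div, div_le_div_iff₀ (by positivity) (by linarith)]
        linarith [mul_sqrt_sq_sub_one_le hω]

lemma normConst_sq_mul_integral_cosSubSinCot_sq (j : ℕ) :
    normConst j ^ 2 * ∫ x in 0..π / 2, cosSubSinCot (ω j) x ^ 2 = 1 := by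
  have hω : ω j ≠ 0 := by linarith [three_le_ω j]
  rw [integral_cosSubSinCot_sq hω, cos_ω_mul_pi_div_two, mul_zero, mul_zero, add_zero,
    normConst_sq_mul]

lemma e'_div_ω_mul_tan (j : ℕ) {x : ℝ} (hx : tan x ≠ 0) :
    e' j x / ω j * tan x = normConst j * cosSubSinCot (ω j) x := by
  have hω : ω j ≠ 0 := by linarith [three_le_ω j]
  rw [e', cosSubSinCot, normConst, ← tan_inv_eq_cot]
  field_simp

lemma e_mul_tan_sq (j : ℕ) {x : ℝ} (hx : tan x ≠ 0) :
    (e j x * tan x) ^ 2 = (normConst j * cosSubSinCot (ω j) (π / 2 - x)) ^ 2 := by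
  have h_reflect : cosSubSinCot (ω j) (π / 2 - x) =
      sin (ω j * (π / 2)) * (ω j * sin (ω j * x) - cos (ω j * x) * tan x) := by
    rw [cosSubSinCot, cot_eq_cos_div_sin, cos_pi_div_two_sub, sin_pi_div_two_sub,
      ← tan_eq_sin_div_cos, mul_sub, cos_sub, sin_sub, cos_ω_mul_pi_div_two]
    ring
  have h_tan : e j x * tan x = normConst j * (ω j * sin (ω j * x) - cos (ω j * x) * tan x) := by
    rw [e_eq_normConst_mul, ← tan_inv_eq_cot]
    field_simp
  rw [h_reflect, h_tan, mul_pow, mul_pow, mul_pow, sin_ω_mul_pi_div_two_sq, one_mul]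

theorem setIntegral_e'_div_ω_mul_tan_sq (j : ℕ) :
    ∫ x in Set.Ioo 0 (π / 2), (e' j x / ω j * tan x) ^ 2 = 1 := by
  calc _ = ∫ x in Set.Ioo 0 (π / 2), (normConst j * cosSubSinCot (ω j) x) ^ 2 :=
        setIntegral_congr_fun measurableSet_Ioo fun x hx => by
          simp only [e'_div_ω_mul_tan j (tan_ne_zero_of_mem_Ioo_pi_div_two hx)]
    _ = normConst j ^ 2 * ∫ x in 0..π / 2, cosSubSinCot (ω j) x ^ 2 := by
        rw [intervalIntegral.integral_of_le pi_div_two_pos.le, integral_Ioc_eq_integral_Ioo,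
          ← integral_const_mul]
        simp only [mul_pow]
    _ = 1 := normConst_sq_mul_integral_cosSubSinCot_sq j

theorem setIntegral_e_mul_tan_sq (j : ℕ) :
    ∫ x in Set.Ioo 0 (π / 2), (e j x * tan x) ^ 2 = 1 := by
  calc _ = ∫ x in Set.Ioo 0 (π / 2), (normConst j * cosSubSinCot (ω j) (π / 2 - x)) ^ 2 :=
        setIntegral_congr_fun measurableSet_Ioo fun x hx =>
          e_mul_tan_sq j (tan_ne_zero_of_mem_Ioo_pi_div_two hx)
    _ = normConst j ^ 2 * ∫ x in 0..π / 2, cosSubSinCot (ω j) (π / 2 - x) ^ 2 := by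
        rw [intervalIntegral.integral_of_le pi_div_two_pos.le, integral_Ioc_eq_integral_Ioo,
          ← integral_const_mul]
        simp only [mul_pow]
    _ = normConst j ^ 2 * ∫ x in 0..π / 2, cosSubSinCot (ω j) x ^ 2 := by
        rw [intervalIntegral.integral_comp_sub_left (fun x => cosSubSinCot (ω j) x ^ 2), sub_self,
          sub_zero]
    _ = 1 := normConst_sq_mul_integral_cosSubSinCot_sq j

theorem abs_setIntegral_mul_mul_e_mul_tail_le (l m : ℕ) {f g : ℝ → ℝ}
    (hf : ∫ x in Set.Ioo 0 (π / 2), (f x * tan x) ^ 2 = 1)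
    (hg : ∫ x in Set.Ioo 0 (π / 2), (g x * tan x) ^ 2 = 1) :
    |∫ x in Set.Ioo 0 (π / 2), f x * g x * e l x *
        (∫ y in Set.Ioo x (π / 2), e m y * sin y * cos y) * tan x ^ 2| ≤
      4 / √π * (ω l / ω m) := by
  have h_sup : ∀ x ∈ Set.Ioo 0 (π / 2),
      |e l x * ∫ y in Set.Ioo x (π / 2), e m y * sin y * cos y| ≤ 2 / √π * ω l * (2 / ω m) := by
    intro x hx
    have h_e := abs_e_le l (sin_pos_of_mem_Ioo_pi_div_two hx).ne'
    rw [abs_mul]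
    exact mul_le_mul h_e (abs_setIntegral_e_mul_sin_mul_cos_le m hx) (abs_nonneg _)
      ((abs_nonneg _).trans h_e)
  calc _ = |∫ x in Set.Ioo 0 (π / 2), (f x * tan x) * (g x * tan x) *
        (e l x * ∫ y in Set.Ioo x (π / 2), e m y * sin y * cos y)| := by
        congr 2 with x
        ring
    _ ≤ (1 + 1) / 2 * (2 / √π * ω l * (2 / ω m)) := by
        simpa only [hf, hg] using abs_integral_mul_mul_le (integrable_of_integral_eq_one hf)
          (integrable_of_integral_eq_one hg) (ae_restrict_of_forall_mem measurableSet_Ioo h_sup)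
    _ = 4 / √π * (ω l / ω m) := by ring

end Eigenfunctions

/-- Growth of the quartic interaction coefficients `A` and `B`: for all `i, j, l, m ∈ ℕ`,
`|A_{ijl}^{(m)}| ≤ (4/√π)·ω_l/ω_m` and `|B_{ijl}^{(m)}| ≤ (4/√π)·ω_l/ω_m`, i.e. these
Fourier constants are `O(ω_l/ω_m)`. -/
theorem quartic_interaction_coefficients_A_B_growth (i j l m : ℕ) :
    |∫ x in Set.Ioo (0 : ℝ) (Real.pi / 2),
        (e' i x / ω i) * (e' j x / ω j) * e l x *
          (∫ y in Set.Ioo x (Real.pi / 2), e m y * Real.sin y * Real.cos y) *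
            Real.tan x ^ 2| ≤ (4 / Real.sqrt Real.pi) * (ω l / ω m) ∧
    |∫ x in Set.Ioo (0 : ℝ) (Real.pi / 2),
        e i x * e j x * e l x *
          (∫ y in Set.Ioo x (Real.pi / 2), e m y * Real.sin y * Real.cos y) *
            Real.tan x ^ 2| ≤ (4 / Real.sqrt Real.pi) * (ω l / ω m) :=
  ⟨abs_setIntegral_mul_mul_e_mul_tail_le l m (setIntegral_e'_div_ω_mul_tan_sq i)
      (setIntegral_e'_div_ω_mul_tan_sq j),
    abs_setIntegral_mul_mul_e_mul_tail_le l m (setIntegral_e_mul_tan_sq i)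
      (setIntegral_e_mul_tan_sq j)⟩
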